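/- The restricted inclusion atom is characterized by an existential extension: let M be a multiteam over α, f, g : α → β, and A : β → Prop a (decidable) condition. Then Multiset.map f (M.filter (fun s => A (f s))) ≤ Multiset.map g M if and only if there exists a multiteam N : Multiset (α × β) such that Multiset.map Prod.fst N = M, Multiset.map Prod.snd N ≤ Multiset.map (fun p => f p.1) N, and for every pair p occurring in N, if A p.2 then p.2 = g p.1. -/

import Mathlib

/-!
Since `N` extends `M`, the values of `x'` and of `f` over `N` form multisets of the same
cardinality, so the inclusion `x' ⊑ f` is an equality: `N` is a matching of `M` with `M.map f` in
which a value satisfying `A` may only be matched with an assignment whose `g`-value it is. The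
values outside `A` are unconstrained and can be matched with whatever assignments are left over, so
such a matching exists as soon as the values in `A` can be matched, i.e. form a submultiset of
`M.map g`.
-/

namespace Multiteam

open Multiset

variable {α β : Type*} {r : α → β → Prop} {A : β → Prop} {g : α → β}
  {s : Multiset α} {t : Multiset β}

theorem map_le_map_iff_map_eq_map {f : α → β} : s.map f ≤ s.map g ↔ s.map f = s.map g :=
  ⟨fun h => eq_of_le_of_card_le h (by simp), le_of_eq⟩

theorem rel_eq_apply_iff_map_eq : Rel (fun a b => b = g a) s t ↔ s.map g = t :=
  (rel_map_left (r := fun a b => b = a)).symm.trans rel_flip_eq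

theorem le_map_iff_exists_le_map_eq : t ≤ s.map g ↔ ∃ s' ≤ s, s'.map g = t := by
  constructor
  · intro h
    obtain ⟨u, hu⟩ := Multiset.le_iff_exists_add.1 h
    have hrel : Rel (fun a b => b = g a) s (t + u) := rel_eq_apply_iff_map_eq.2 hu
    obtain ⟨s', v, hs', -, rfl⟩ := rel_add_right.1 hrel
    exact ⟨s', le_add_right s' v, rel_eq_apply_iff_map_eq.1 hs'⟩
  · rintro ⟨s', hle, rfl⟩
    exact map_le_map hle

theorem rel_iff_exists_map_fst_map_snd :
    Rel r s t ↔
      ∃ N : Multiset (α × β), N.map Prod.fst = s ∧ N.map Prod.snd = t ∧ ∀ p ∈ N, r p.1 p.2 := by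
  constructor
  · intro h
    induction h with
    | zero => exact ⟨0, by simp⟩
    | @cons a b _ _ hab _ ih =>
      obtain ⟨N, rfl, rfl, hN⟩ := ih
      exact ⟨(a, b) ::ₘ N, by simp, by simp, forall_mem_cons.2 ⟨hab, hN⟩⟩
  · rintro ⟨N, rfl, rfl, hN⟩
    exact rel_map.2 (rel_refl_of_refl_on hN)

theorem rel_of_forall_mem_of_card_eq (h : ∀ a ∈ s, ∀ b ∈ t, r a b) (hcard : s.card = t.card) :
    Rel r s t := by
  have hconst : s.map (fun _ => ()) = t.map (fun _ => ()) := by simp [hcard]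
  exact (rel_map.1 (rel_eq.2 hconst)).mono fun a ha b hb _ => h a ha b hb

theorem rel_imp_iff_card_eq_and_exists_le_rel_filter [DecidablePred A] :
    Rel (fun a b => A b → r a b) s t ↔ s.card = t.card ∧ ∃ s' ≤ s, Rel r s' (t.filter A) := by
  have hsplit : t.filter A + t.filter (¬ A ·) = t := filter_add_not A t
  constructor
  · intro h
    refine ⟨card_eq_card_of_rel h, ?_⟩
    rw [← hsplit] at h
    obtain ⟨s', u, hs', -, rfl⟩ := rel_add_right.1 h
    exact ⟨s', le_add_right s' u, hs'.mono fun _ _ _ hb himp => himp (of_mem_filter hb)⟩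
  · rintro ⟨hcard, s', hle, hs'⟩
    obtain ⟨u, rfl⟩ := Multiset.le_iff_exists_add.1 hle
    have hcard_rest : u.card = (t.filter (¬ A ·)).card := by
      have hcard' := card_eq_card_of_rel hs'
      rw [← hsplit, card_add, card_add] at hcard
      lia
    have hrest : Rel (fun a b => A b → r a b) u (t.filter (¬ A ·)) :=
      rel_of_forall_mem_of_card_eq (fun _ _ _ hb hA => absurd hA (mem_filter.1 hb).2) hcard_rest
    have hsel : Rel (fun a b => A b → r a b) s' (t.filter A) :=
      hs'.mono fun _ _ _ _ hr _ => hr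
    exact hsplit ▸ hsel.add hrest

theorem rel_imp_eq_apply_iff_card_eq_and_filter_le_map [DecidablePred A] :
    Rel (fun a b => A b → b = g a) s t ↔ s.card = t.card ∧ t.filter A ≤ s.map g := by
  simp only [rel_imp_iff_card_eq_and_exists_le_rel_filter, rel_eq_apply_iff_map_eq,
    le_map_iff_exists_le_map_eq]

end Multiteam

/-- The restricted inclusion atom is characterized by an existential extension. -/
theorem restricted_inclusion_iff_existential_extension
    {α β : Type*} (M : Multiset α) (f g : α → β) (A : β → Prop) [DecidablePred A] :
    Multiset.map f (M.filter (fun s => A (f s))) ≤ Multiset.map g M ↔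
      ∃ N : Multiset (α × β),
        Multiset.map Prod.fst N = M ∧
        Multiset.map Prod.snd N ≤ Multiset.map (fun p => f p.1) N ∧
        ∀ p ∈ N, A p.2 → p.2 = g p.1 := by
  have hmatching : (M.map f).filter A ≤ M.map g ↔
      Multiset.Rel (fun a b => A b → b = g a) M (M.map f) := by
    simp only [Multiteam.rel_imp_eq_apply_iff_card_eq_and_filter_le_map, Multiset.card_map,
      true_and]
  have hfilter : (M.filter (fun s => A (f s))).map f = (M.map f).filter A :=
    (Multiset.filter_map A f M).symm
  rw [hfilter, hmatching, Multiteam.rel_iff_exists_map_fst_map_snd]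
  refine exists_congr fun N => and_congr_right fun hfst => and_congr_left' ?_
  have hf : N.map (fun p => f p.1) = M.map f := by
    rw [← hfst, Multiset.map_map, Function.comp_def]
  rw [Multiteam.map_le_map_iff_map_eq_map, hf]
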